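/- If C is any maximal configuration on the m×n grid with m,n ≥ 2, then: if n ≡ 0 (mod 4) then |C| ≥ mn/2 + 2; if n ≡ 2 (mod 4) then |C| ≥ m(n+2)/2; and if n is odd then |C| ≥ m(n+1)/2 + 1. -/

import Mathlib

/-- The m×n grid of lots: rows 1..m (row m southernmost), columns 1..n. -/
def Grid (m n : ℕ) : Finset (ℕ × ℕ) := Finset.Icc 1 m ×ˢ Finset.Icc 1 n

/-- A house at `p` is blocked from sunlight if the lots immediately to its
east `(p.1, p.2+1)`, west `(p.1, p.2-1)` and south `(p.1+1, p.2)` are all occupied.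
(For configurations contained in the grid, membership in `C` automatically forces
these lots to lie in the grid; truncated subtraction sends column 1's western
neighbour to column 0, which is outside the grid.) -/
def Blocked (C : Finset (ℕ × ℕ)) (p : ℕ × ℕ) : Prop :=
  (p.1, p.2 + 1) ∈ C ∧ (p.1, p.2 - 1) ∈ C ∧ (p.1 + 1, p.2) ∈ C

/-- A configuration on the m×n grid is permissible if it lies in the grid and
no house in it is blocked from sunlight. -/
def Permissible (m n : ℕ) (C : Finset (ℕ × ℕ)) : Prop :=
  C ⊆ Grid m n ∧ ∀ p ∈ C, ¬ Blocked C p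

/-- A configuration is maximal if it is permissible and no permissible
configuration strictly contains it. -/
def MaximalConfig (m n : ℕ) (C : Finset (ℕ × ℕ)) : Prop :=
  Permissible m n C ∧ ∀ D : Finset (ℕ × ℕ), Permissible m n D → C ⊆ D → D = C

namespace SLB

def EE (l : ℕ) (b : Bool) : ℤ :=
  if b then (if l % 4 = 2 then -1 else 0) else (if l % 4 = 0 then 1 else 0)

def cd (l : ℕ) (b : Bool) : ℕ :=
  if b then (if l % 4 = 2 then 1 else 2) else (if l % 4 = 0 then 3 else 2)

def val : ℕ → ℤ
  | 1 => -1
  | 3 => 1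
  | _ => 0

def ee (k : ℕ) : ℤ := if k % 4 = 0 then 0 else if k % 4 = 2 then 2 else 1

/-- transition function of the column automaton; 15 is the invalid state -/
def step (c s : ℕ) : ℕ :=
  match c, s with
  | 0, 0 => 12
  | 0, 2 => 1
  | 0, 3 => 2
  | 1, 0 => 10
  | 1, 1 => 14
  | 1, 2 => 4
  | 1, 3 => 5
  | 2, 0 => 10
  | 2, 1 => 14
  | 2, 2 => 6
  | 2, 3 => 7
  | 3, 2 => 6
  | 3, 3 => 7
  | 4, 0 => 10
  | 6, 0 => 10
  | 8, 0 => 10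
  | 5, 0 => 11
  | 7, 0 => 11
  | 9, 0 => 11
  | 4, 1 => 14
  | 5, 1 => 14
  | 6, 1 => 14
  | 7, 1 => 14
  | 8, 1 => 14
  | 9, 1 => 14
  | 4, 2 => 8
  | 5, 2 => 8
  | 6, 2 => 8
  | 7, 2 => 8
  | 8, 2 => 8
  | 9, 2 => 8
  | 4, 3 => 9
  | 5, 3 => 9
  | 6, 3 => 9
  | 7, 3 => 9
  | 8, 3 => 9
  | 9, 3 => 9
  | 10, 2 => 1
  | 10, 3 => 2
  | 11, 0 => 12
  | 11, 1 => 13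
  | 11, 2 => 1
  | 11, 3 => 2
  | 12, 3 => 3
  | 13, 0 => 12
  | 13, 1 => 13
  | 13, 2 => 1
  | 13, 3 => 2
  | 14, 0 => 12
  | 14, 1 => 13
  | 14, 2 => 1
  | 14, 3 => 2
  | _, _ => 15

def isN (c : ℕ) : Bool := (c == 13) || (c == 14)
def isT (c s : ℕ) : Bool := decide (4 ≤ c) && decide (c ≤ 9) && decide (2 ≤ s)
def tL (c : ℕ) : Bool := (c == 6) || (c == 7)
def nU (nu c p u s : ℕ) : ℕ := if isN c then cd (nu + 3 * p) (decide (2 ≤ s)) else u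
def nV (nu c p v s : ℕ) : ℕ := if isT c s then cd (nu + 3 * p) ((s == 3)) else v
def w0 : ℕ → ℤ
  | 0 => -1
  | 1 => 0
  | _ => 1
def wt (nu c p u v s : ℕ) : ℤ :=
  w0 s - (if isT c s then 1 else 0)
   + ((if isN c && (u == 0) then EE (p + 3) ((c == 14)) else 0) + val (nU nu c p u s) - val u)
   - ((if isT c s && (v == 0) then EE (p + 3) (tL c) else 0) + val (nV nu c p v s) - val v)

def tab : ℕ → ℕ
  | 0 => 2409737458315043022118878259824284635951692677119924003606313715104573441845100308700446060406755583812856478617039047246213442996907701551942910013704355885775403850569518178906405346142279404065158851477017423786047339092486865568084204804274034661438649669508740104838329618364885625107768378915623364937677989683576353573423063010695011782603835729832760745367055155760760121393704368923574948436194961421233557601915051556456026268941044184865849909777697120205888427759417497931156921666000679200193962142693231196541373323342217086059966752865758495757237579735707016721140829031966388306261174155125234512346040687160440693932218808247807343540325760279069183270962808485601768964543976576648392323056465397624855820726623497943748726705240231382397438699488087293450562892234726663723732718821815096169099311015161157335463350448346515164576510670089413227885653970864823448550756844340029969619707246417325948734764578390119922536695508790160246051394706365360673989696363129573901222930773812733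882942416744216517529475997458643530992722707011603323350403699842402108479829071385893277875746992921535033012422288026965767736619192711144466808817
  | 1 => 1843669297508839000088227177491911295127280152416332141958859095040267831769784510935351569174641580383569471293414666835309356905754113309570782392551729716192358977122683378779478148842274106569346588990878591729060798186169624398646462298848573955273731463765805616740894437420244843795726774377232373592406477447441514219083104780048284783611708262245793230535843617553185324481260139850127142209605205698978774187366072514579433799693938194429813003357011372586991619728638653931629961078366569015818069358458588518696097332771570965173007605772326271184558113393377921037560258981089418802370529527740008442664337894248503797927006951029644512448562618998333903477215654224397185771616381832372740183844440644977226321112041207960894361014525309603582795235340934113991151719858336329606645199350133931049490364032713992106296293527362818508243934866069635831460485574479516994637028352454417255673946435728471286420708012663412411139216541760943678291234646159421109675479176750199473097103889629190352688091904269148590162987960258404667370934373046941206654966745117674895259518676439902338291893495553434080933056337955840959747577614954263478257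
  | 2 => 2409737458315043022118878259824284635951692677119924003606313715104573441845095399987951172314078651172450609220757544144773081486068651742031933560948340842751539183439128941962249626397033598014099196999251037190360849277449050835611650668358371040013178542771883001255915703950198130509506778665358811677219826309783846762415638125482801485305262424834573980875383485223260267174963357271450059819733686259285637459012577221203119895608081170540892166129572160181223907075678606288544084940467463962158075830551843032386132896470790591072664841652295772231845288363835493079717198720127157851537287648241402371865044392589780320117164101626342725116293346489153629890906517539307226128093165034899608374911905270522424100596250794979267839335198808242970429524551872768992807161480655728872117331725905798418521690587504356097898720945296909157013171157188127744830247592403416662407553323484235423198774566139311683050796400161405524405466466293354374051299691141547011295351284066123507357070068858290814410192324250629988302296330806314576775022305819858402282457156608721500601229923169072148061790972682701388984767466244928903320291511487369838577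
  | _ => 1843669297508839000088227177491911295127280152416332141958859095040267831769784510935351569174642110400820170679589148884592830596120996604860433136422001424362500657437626818415681631904602267515470869458614286488792641096415073208207080242883926415134025569474632060239842919326239634873262075205630661146983341299735652817636067245479604092192446665105730598939230774620385689868117338207741950291207037502684563959017445572798138227702806081296892094110022318818031288649880210708303322347709996378353644254412472739496118310565156862223701346581937351292020448424456421637803564318156967519768831865534282755177726490859473738393459768860838026841295485638472974222680456686891419731312143303405939347435258347427348914700231830346030414397774343415042967894634635326908649570228377999517290359509362511443148547421170142094297284598934820580098846795945181489619789297365205006341353414928461522199176669654531335305230547435092493093033709569327111573176231053910033813547453382930066851275027700719476920822983625941224932233917187589713700617155676793206501219521621856719916510096855232882821914601271079937779280098001185949254419943600854925297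

def look (nu c p u v : ℕ) : ℕ := tab nu / 16 ^ (((c * 4 + p) * 4 + u) * 4 + v) % 16

def chk1 (nu c p u v s : ℕ) : Bool :=
  let a := look nu c p u v
  decide (a = 15) || decide (step c s = 15) ||
   (let b := look nu (step c s) ((p + 1) % 4) (nU nu c p u s) (nV nu c p v s)
    !(decide (b = 15)) && decide ((b : ℤ) ≤ a + wt nu c p u v s))

theorem chk : ∀ nu < 4, ∀ c < 15, ∀ p < 4, ∀ u < 4, ∀ v < 4, ∀ s < 4,
    chk1 nu c p u v s = true := by
  decide +kernel

def end1 (nu c u v : ℕ) : Bool :=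
  decide (look nu c nu u v = 15) || decide (ee nu + 1 ≤ (look nu c nu u v : ℤ)) ||
  (decide (c = 3) || decide (c = 10) || decide (c = 12) || decide (c = 13) || decide (c = 14))

theorem chkEnd : ∀ nu < 4, ∀ c < 15, ∀ u < 4, ∀ v < 4, end1 nu c u v = true := by
  decide +kernel

theorem chkStart : ∀ nu < 4, look nu 0 0 0 0 = 1 := by decide +kernel
theorem chkR3 : ∀ nu < 4, ∀ p < 4, ∀ u < 4, look nu 8 p u 0 = 15 ∧ look nu 9 p u 0 = 15 := by
  decide +kernel

/-- code of the right contribution of the last mark -/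
def rr (n : ℕ) (M z : ℕ → Bool) : ℕ → ℕ
  | 0 => 0
  | k + 1 => if M k then cd (n + 3 * k) (z (k + 1)) else rr n M z k

/-- left contribution of the first mark -/
def ll (n : ℕ) (M z : ℕ → Bool) : ℕ → ℤ
  | 0 => 0
  | k + 1 => if M k && (rr n M z k == 0) then EE (k + 3) (z (k - 1)) else ll n M z k

def pot (n : ℕ) (M z : ℕ → Bool) : ℤ := ll n M z n + val (rr n M z n)

def tri (x : ℕ → Bool) (k : ℕ) : Bool := x (k - 1) && x k && x (k + 1)

def ss (x N : ℕ → Bool) : ℕ → ℤ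
  | 0 => 0
  | k + 1 => ss x N k + (if x (k + 1) then 1 else if N (k + 1) then 0 else -1)
      - (if tri x k then 1 else 0)

structure RowOK (n : ℕ) (x y N : ℕ → Bool) : Prop where
  x0 : x 0 = false
  xn : x (n + 1) = false
  N0 : N 0 = false
  N1 : N 1 = false
  Nn : N n = false
  xN : ∀ k, x k = true → N k = false
  dot : ∀ k, 1 ≤ k → k ≤ n → x k = false → N k = false →
    (x (k - 1) = true ∧ x (k + 1) = true) ∨
    (x (k - 1) = true ∧ x (k - 2) = true ∧ y (k - 1) = true) ∨
    (x (k + 1) = true ∧ x (k + 2) = true ∧ y (k + 1) = true)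

def spec (x y N : ℕ → Bool) (k : ℕ) : ℕ → Prop
  | 0 => k = 0
  | 1 => x k = true ∧ x (k - 1) = false ∧ y k = false
  | 2 => x k = true ∧ x (k - 1) = false ∧ y k = true
  | 3 => x k = true ∧ x (k - 1) = false ∧ y k = true ∧ N (k - 1) = false ∧ x (k - 2) = false ∧ 2 ≤ k
  | 4 => x k = true ∧ x (k - 1) = true ∧ y (k - 1) = false ∧ y k = false
  | 5 => x k = true ∧ x (k - 1) = true ∧ y (k - 1) = false ∧ y k = true
  | 6 => x k = true ∧ x (k - 1) = true ∧ y (k - 1) = true ∧ y k = false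
  | 7 => x k = true ∧ x (k - 1) = true ∧ y (k - 1) = true ∧ y k = true
  | 8 => x k = true ∧ x (k - 1) = true ∧ y k = false
  | 9 => x k = true ∧ x (k - 1) = true ∧ y k = true
  | 10 => x k = false ∧ N k = false ∧ x (k - 1) = true ∧ (x (k - 2) = true → y (k - 1) = false) ∧ 1 ≤ k
  | 11 => x k = false ∧ N k = false ∧ x (k - 1) = true ∧ 1 ≤ k
  | 12 => x k = false ∧ N k = false ∧ x (k - 1) = false ∧ 1 ≤ k
  | 13 => x k = false ∧ N k = true ∧ x (k - 1) = false ∧ 1 ≤ k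
  | 14 => x k = false ∧ N k = true ∧ x (k - 1) = true ∧ 1 ≤ k
  | _ => False

def sym (x y N : ℕ → Bool) (k : ℕ) : ℕ :=
  if x k then (if y k then 3 else 2) else if N k then 1 else 0

lemma sym_lt (x y N k) : sym x y N k < 4 := by unfold sym; split_ifs <;> omega

set_option maxHeartbeats 8000000 in
lemma spec_step {n : ℕ} {x y N : ℕ → Bool} (h : RowOK n x y N) (k : ℕ) (hk : k ≤ n) (c : ℕ)
    (hc : c < 15) (hs : spec x y N k c) :
    spec x y N (k + 1) (step c (sym x y N (k + 1))) ∧ step c (sym x y N (k + 1)) < 15 ∧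
    isN c = N k ∧ isT c (sym x y N (k + 1)) = tri x k ∧
    (N k = true → (c == 14) = x (k - 1)) ∧
    (tri x k = true → c ≠ 8 → c ≠ 9 → tL c = y (k - 1)) := by
  have h0 := h.x0
  have hN0 := h.N0
  have hN1 := h.N1
  have hxN := h.xN k
  have hxN' := h.xN (k+1)
  have hd := h.dot k
  have hd' := h.dot (k - 1)
  have e2 : k - 1 - 1 = k - 2 := by omega
  have e3 : 2 ≤ k → k - 1 + 1 = k := by omega
  have e4 : 2 ≤ k → k - 1 + 2 = k + 1 := by omega
  have e5 : k + 1 - 2 = k - 1 := by omega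
  interval_cases c <;> simp only [spec] at hs <;>
    rcases hx : x (k + 1) <;> rcases hN : N (k + 1) <;> rcases hy : y (k + 1) <;>
    simp [sym, hx, hN, hy, step, spec, isN, isT, tL, tri, e5] <;> grind
lemma EE_mod (k : ℕ) (b : Bool) : EE (k % 4 + 3) b = EE (k + 3) b := by
  have : (k % 4 + 3) % 4 = (k + 3) % 4 := by omega
  simp only [EE, this]

lemma cd_mod (n k : ℕ) (b : Bool) : cd (n % 4 + 3 * (k % 4)) b = cd (n + 3 * k) b := by
  have : (n % 4 + 3 * (k % 4)) % 4 = (n + 3 * k) % 4 := by omega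
  simp only [cd, this]

lemma cd_lt (l b) : cd l b < 4 := by unfold cd; split_ifs <;> omega
lemma cd_pos (l b) : cd l b ≠ 0 := by unfold cd; split_ifs <;> omega

lemma rr_lt (n M z k) : rr n M z k < 4 := by
  induction k with
  | zero => simp [rr]
  | succ k ih => simp only [rr]; split_ifs; exacts [cd_lt _ _, ih]

lemma ll_zero (n M z k) (h : rr n M z k = 0) : ll n M z k = 0 := by
  induction k with
  | zero => rfl
  | succ k ih =>
    simp only [rr] at h
    split_ifs at h with hM
    · exact absurd h (cd_pos _ _)
    · simp [ll, hM, ih h]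

lemma ll_succ (n M z k) : ll n M z (k + 1) = ll n M z k +
    (if (M k && (rr n M z k == 0)) = true then EE (k + 3) (z (k - 1)) else 0) := by
  simp only [ll]
  split_ifs with h
  · simp only [Bool.and_eq_true, beq_iff_eq] at h
    rw [ll_zero _ _ _ _ h.2]; ring
  · ring

lemma inv {n : ℕ} {x y N : ℕ → Bool} (h : RowOK n x y N) (k : ℕ) (hk : k ≤ n + 1) :
    ∃ c < 15, spec x y N k c ∧
      look (n % 4) c (k % 4) (rr n N x k) (rr n (tri x) y k) ≠ 15 ∧
      (look (n % 4) c (k % 4) (rr n N x k) (rr n (tri x) y k) : ℤ) ≤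
        1 + ss x N k + (ll n N x k + val (rr n N x k))
          - (ll n (tri x) y k + val (rr n (tri x) y k)) := by
  have hn4 : n % 4 < 4 := Nat.mod_lt _ (by norm_num)
  induction k with
  | zero =>
    refine ⟨0, by norm_num, rfl, ?_⟩
    simp [rr, ll, ss, val, chkStart _ hn4]
  | succ k ih =>
    obtain ⟨c, hc, hs, h1, h2⟩ := ih (by omega)
    obtain ⟨a1, a2, a3, a4, a5, a6⟩ := spec_step h k (by omega) c hc hs
    have hk4 : k % 4 < 4 := Nat.mod_lt _ (by norm_num)
    have hch := chk _ hn4 c hc _ hk4 _ (rr_lt n N x k) _ (rr_lt n (tri x) y k) _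
      (sym_lt x y N (k + 1))
    have hU : nU (n % 4) c (k % 4) (rr n N x k) (sym x y N (k + 1)) = rr n N x (k + 1) := by
      simp only [nU, rr, a3, cd_mod]
      split_ifs
      · congr 1
        unfold sym
        cases x (k + 1) <;> cases y (k + 1) <;> cases N (k + 1) <;> simp
      · rfl
    have hV : nV (n % 4) c (k % 4) (rr n (tri x) y k) (sym x y N (k + 1))
        = rr n (tri x) y (k + 1) := by
      simp only [nV, rr, a4, cd_mod]
      split_ifs with ht
      · congr 1
        have : x (k + 1) = true := by simp [tri] at ht; exact ht.2
        simp only [sym, this]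
        cases y (k + 1) <;> simp
      · rfl
    have hmod : (k % 4 + 1) % 4 = (k + 1) % 4 := by omega
    have hne : step c (sym x y N (k + 1)) ≠ 15 := by omega
    simp only [chk1, hU, hV, hmod, Bool.or_eq_true, decide_eq_true_eq, decide_eq_false_iff_not, Bool.and_eq_true,
      Bool.not_eq_true', h1, hne, false_or] at hch
    obtain ⟨g1, g2⟩ := hch
    refine ⟨_, a2, a1, ?_, ?_⟩
    · exact g1
    · refine g2.trans ?_
      have hw0 : w0 (sym x y N (k + 1)) =
          (if x (k + 1) then 1 else if N (k + 1) then 0 else -1) := by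
        unfold sym
        cases x (k + 1) <;> cases y (k + 1) <;> cases N (k + 1) <;> simp [w0]
      have hLU : (if (isN c && (rr n N x k == 0)) = true then EE (k % 4 + 3) (c == 14) else 0)
          = ll n N x (k + 1) - ll n N x k := by
        rw [ll_succ, a3, EE_mod]
        split_ifs with hh
        · rw [a5 (by simp at hh; exact hh.1)]; ring
        · ring
      have hLV : (if (isT c (sym x y N (k + 1)) && (rr n (tri x) y k == 0)) = true
            then EE (k % 4 + 3) (tL c) else 0)
          = ll n (tri x) y (k + 1) - ll n (tri x) y k := by
        rw [ll_succ, a4, EE_mod]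
        split_ifs with hh
        · simp only [Bool.and_eq_true, beq_iff_eq] at hh
          have h8 := chkR3 _ hn4 _ hk4 _ (rr_lt n N x k)
          rw [a6 hh.1 ?_ ?_]
          · ring
          · rintro rfl; rw [hh.2] at h1; exact h1 h8.1
          · rintro rfl; rw [hh.2] at h1; exact h1 h8.2
        · ring
      rw [a4] at hLV
      simp only [wt, hU, hV, hLU, hLV, hw0, a4]
      have hss : ss x N (k + 1) = ss x N k + (if x (k + 1) then 1 else if N (k + 1) then 0 else -1)
        - (if tri x k then 1 else 0) := rfl
      rw [hss]
      linarith

theorem row_ineq {n : ℕ} {x y N : ℕ → Bool} (h : RowOK n x y N) :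
    ee n ≤ ss x N n + pot n N x - pot n (tri x) y := by
  obtain ⟨c, hc, hs, h1, h2⟩ := inv h n (by omega)
  have hn4 : n % 4 < 4 := Nat.mod_lt _ (by norm_num)
  have hE := chkEnd _ hn4 c hc _ (rr_lt n N x n) _ (rr_lt n (tri x) y n)
  have hne : ¬ (c = 3 ∨ c = 10 ∨ c = 12 ∨ c = 13 ∨ c = 14) := by
    have hxn := h.xn
    have hNn := h.Nn
    have hd := h.dot n
    have hd' := h.dot (n - 1)
    have e2 : n - 1 - 1 = n - 2 := by omega
    have e3 : 2 ≤ n → n - 1 + 1 = n := by omega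
    have e4 : 2 ≤ n → n - 1 + 2 = n + 1 := by omega
    rintro (rfl | rfl | rfl | rfl | rfl) <;> simp only [spec] at hs <;> grind
  simp only [end1, Bool.or_eq_true, decide_eq_true_eq, h1, false_or] at hE
  have hee : ee (n % 4) = ee n := by simp [ee]
  rw [hee] at hE
  unfold pot
  rcases hE with hE | hE
  · linarith
  · exact absurd (by tauto) hne

def cnt (f : ℕ → Bool) : ℕ → ℤ
  | 0 => 0
  | k + 1 => cnt f k + (if f (k + 1) then 1 else 0)

lemma cnt_nonneg (f k) : 0 ≤ cnt f k := by
  induction k with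
  | zero => simp [cnt]
  | succ k ih => simp only [cnt]; split_ifs <;> omega

lemma cnt_mono (f) {a b : ℕ} (h : a ≤ b) : cnt f a ≤ cnt f b := by
  induction b, h using Nat.le_induction with
  | base => exact le_rfl
  | succ k _ ih => simp only [cnt]; split_ifs <;> omega

lemma cnt_pos (f) {a b : ℕ} (ha : 1 ≤ a) (h : a ≤ b) (hf : f a = true) : 1 ≤ cnt f b := by
  refine le_trans ?_ (cnt_mono f h)
  obtain ⟨a, rfl⟩ : ∃ c, a = c + 1 := ⟨a - 1, by omega⟩
  have := cnt_nonneg f a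
  simp only [cnt, hf]; simp; exact this

lemma cnt_two (f) {a b n : ℕ} (ha : 1 ≤ a) (hab : a < b) (hb : b ≤ n) (hfa : f a = true)
    (hfb : f b = true) : 2 ≤ cnt f n := by
  refine le_trans ?_ (cnt_mono f hb)
  obtain ⟨b, rfl⟩ : ∃ c, b = c + 1 := ⟨b - 1, by omega⟩
  have := cnt_pos f ha (show a ≤ b by omega) hfa
  simp only [cnt, hfb, if_true]; omega

lemma ss_eq (x N : ℕ → Bool) (h0 : x 0 = false) (hxN : ∀ k, x k = true → N k = false) (k : ℕ) :
    ss x N (k + 1) = 2 * cnt x (k + 1) - (k + 1) + cnt N (k + 1) - cnt (tri x) k := by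
  induction k with
  | zero =>
    have := hxN 1
    have ht : tri x 0 = false := by simp [tri, h0]
    simp only [ss, cnt, ht]
    rcases hx : x (0 + 1) <;> rcases hN : N (0 + 1) <;> simp_all
  | succ k ih =>
    have := hxN (k + 1 + 1)
    rw [ss, ih]
    have e1 : cnt x (k + 1 + 1) = cnt x (k + 1) + (if x (k + 1 + 1) then 1 else 0) := rfl
    have e2 : cnt N (k + 1 + 1) = cnt N (k + 1) + (if N (k + 1 + 1) then 1 else 0) := rfl
    have e3 : cnt (tri x) (k + 1) = cnt (tri x) k + (if tri x (k + 1) then 1 else 0) := rfl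
    rw [e1, e2, e3]
    clear e1 e2 e3 ih
    push_cast
    generalize cnt x (k + 1) = a1
    generalize cnt N (k + 1) = a2
    generalize cnt (tri x) k = a3
    rcases hx : x (k + 1 + 1) <;> rcases hN : N (k + 1 + 1) <;> rcases ht : tri x (k + 1) <;>
      simp_all <;> ring

lemma pot_bound (n M z) (h0 : M 0 = false) (k : ℕ) :
    (ll n M z k = 0 ∧ rr n M z k = 0) ∨ (-1 ≤ ll n M z k ∧ 1 ≤ cnt M k) := by
  induction k with
  | zero => left; simp [ll, rr]
  | succ k ih =>
    rcases hM : M k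
    · simp only [ll, rr, hM]
      have := cnt_mono M (show k ≤ k + 1 by omega)
      rcases ih with ih | ih
      · left; simpa using ih
      · right; refine ⟨by simpa using ih.1, by omega⟩
    · right
      refine ⟨?_, ?_⟩
      · have hE : ∀ l b, -1 ≤ EE l b := by
          intro l b; unfold EE; split_ifs <;> omega
        simp only [ll]
        split_ifs
        · exact hE _ _
        · rcases ih with ih | ih
          · omega
          · exact ih.1
      · refine cnt_pos M (a := k) ?_ (by omega) hM
        rcases k with _ | k
        · rw [h0] at hM; cases hM
        · omega

lemma pot_ge (n M z) (h0 : M 0 = false) : -1 ≤ pot n M z + cnt M n := by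
  have hv : ∀ c, -1 ≤ val c := by
    intro c; unfold val; split <;> omega
  have := hv (rr n M z n)
  have h2 := cnt_nonneg M n
  unfold pot
  rcases pot_bound n M z h0 n with h | h
  · rw [h.1, h.2]; simp [val]; omega
  · omega

lemma tri_count (x : ℕ → Bool) (h0 : x 0 = false) (k : ℕ) :
    min (cnt x (k + 1)) 2 ≤ cnt x (k + 1) - cnt (tri x) k := by
  induction k with
  | zero => simp [cnt]
  | succ k ih =>
    rw [show cnt (tri x) (k + 1) = cnt (tri x) k + (if tri x (k + 1) then 1 else 0) from rfl]
    rw [show cnt x (k + 1 + 1) = cnt x (k + 1) + (if x (k + 1 + 1) then 1 else 0) from rfl]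
    rcases ht : tri x (k + 1)
    · simp; split_ifs <;> omega
    · simp only [tri, Bool.and_eq_true, Nat.add_sub_cancel] at ht
      obtain ⟨⟨t1, t2⟩, t3⟩ := ht
      have hk : 1 ≤ k := by
        rcases k with _ | k
        · rw [h0] at t1; cases t1
        · omega
      have := cnt_two x hk (show k < k + 1 by omega) le_rfl t1 t2
      simp [t3]; omega

lemma compl_count (x T : ℕ → Bool) (n : ℕ) (h : ∀ j, 1 ≤ j → j ≤ n → x j = false → T j = true)
    (k : ℕ) (hk : k ≤ n) : (k : ℤ) ≤ cnt x k + cnt T k := by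
  induction k with
  | zero => simp [cnt]
  | succ k ih =>
    have := h (k + 1) (by omega) hk
    have := ih (by omega)
    simp only [cnt]
    push_cast
    rcases hx : x (k + 1) <;> rcases hT : T (k + 1) <;> simp_all <;> omega

lemma cnt_sum (f : ℕ → Bool) (n : ℕ) :
    cnt f n = ∑ j ∈ Finset.Icc 1 n, (if f j then (1 : ℤ) else 0) := by
  induction n with
  | zero => simp [cnt]
  | succ k ih => rw [Finset.sum_Icc_succ_top (by omega), ← ih]; rfl

open Classical in
noncomputable def XX (C : Finset (ℕ × ℕ)) (i j : ℕ) : Bool := decide ((i, j) ∈ C)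

lemma XX_true {C i j} : XX C i j = true ↔ (i, j) ∈ C := by simp [XX]
lemma XX_false {C i j} : XX C i j = false ↔ (i, j) ∉ C := by simp [XX]

lemma grid_mem {m n i j : ℕ} : (i, j) ∈ Grid m n ↔ (1 ≤ i ∧ i ≤ m) ∧ 1 ≤ j ∧ j ≤ n := by
  simp [Grid]

lemma card_eq {m n : ℕ} {C : Finset (ℕ × ℕ)} (h : C ⊆ Grid m n) :
    (C.card : ℤ) = ∑ i ∈ Finset.Icc 1 m, cnt (XX C i) n := by
  have h1 : C = (Grid m n).filter (fun p => p ∈ C) := by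
    ext p; simp only [Finset.mem_filter]; exact ⟨fun hp => ⟨h hp, hp⟩, fun hp => hp.2⟩
  have h2 : (C.card : ℤ) = ∑ p ∈ Grid m n, (if p ∈ C then (1 : ℤ) else 0) := by
    rw [Finset.sum_boole, ← h1]
  rw [h2, Grid, Finset.sum_product]
  refine Finset.sum_congr rfl fun i _ => ?_
  rw [cnt_sum]
  refine Finset.sum_congr rfl fun j _ => ?_
  simp [XX]

lemma just {m n : ℕ} {C : Finset (ℕ × ℕ)} (hC : MaximalConfig m n C) {i j : ℕ}
    (hi : 1 ≤ i) (him : i ≤ m) (hj : 1 ≤ j) (hjn : j ≤ n) (hx : XX C i j = false) :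
    (XX C i (j - 1) = true ∧ XX C i (j + 1) = true ∧ XX C (i + 1) j = true) ∨
    (XX C i (j - 1) = true ∧ XX C i (j - 2) = true ∧ XX C (i + 1) (j - 1) = true) ∨
    (XX C i (j + 1) = true ∧ XX C i (j + 2) = true ∧ XX C (i + 1) (j + 1) = true) ∨
    tri (XX C (i - 1)) j = true := by
  obtain ⟨⟨hsub, hper⟩, hmax⟩ := hC
  rw [XX_false] at hx
  by_contra hcon
  have hP : Permissible m n (insert (i, j) C) := by
    refine ⟨?_, ?_⟩
    · intro p hp
      rcases Finset.mem_insert.1 hp with rfl | hp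
      · exact grid_mem.2 ⟨⟨hi, him⟩, hj, hjn⟩
      · exact hsub hp
    · rintro ⟨a, b⟩ hp ⟨hE, hW, hS⟩
      apply hcon
      simp only [Finset.mem_insert, Prod.mk.injEq] at hp hE hW hS
      simp only [tri, Bool.and_eq_true, XX_true]
      rcases hp with ⟨rfl, rfl⟩ | hp
      · left
        refine ⟨hW.resolve_left (by omega), hE.resolve_left (by omega), hS.resolve_left (by omega)⟩
      · have hg := grid_mem.1 (hsub hp)
        have hnb := hper _ hp
        by_cases c1 : a = i ∧ b + 1 = j
        · obtain ⟨rfl, rfl⟩ := c1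
          right; left
          exact ⟨hp, hW.resolve_left (by omega), hS.resolve_left (by omega)⟩
        · by_cases c2 : a = i ∧ b - 1 = j
          · obtain ⟨rfl, c2⟩ := c2
            obtain rfl : b = j + 1 := by omega
            right; right; left
            exact ⟨hp, hE.resolve_left c1, hS.resolve_left (by omega)⟩
          · by_cases c3 : a + 1 = i ∧ b = j
            · obtain ⟨rfl, rfl⟩ := c3
              right; right; right
              exact ⟨⟨hW.resolve_left c2, hp⟩, hE.resolve_left c1⟩
            · exact absurd ⟨hE.resolve_left c1, hW.resolve_left c2, hS.resolve_left c3⟩ hnb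
  have := hmax _ hP (Finset.subset_insert _ _)
  exact hx (this ▸ Finset.mem_insert_self _ _)

lemma XX_out {m n : ℕ} {C : Finset (ℕ × ℕ)} (h : C ⊆ Grid m n) {i j : ℕ}
    (ho : i = 0 ∨ m < i ∨ j = 0 ∨ n < j) : XX C i j = false := by
  rw [XX_false]
  intro hm
  have := grid_mem.1 (h hm)
  omega

lemma tri_below {m n : ℕ} {C : Finset (ℕ × ℕ)} (hC : Permissible m n C) {i j : ℕ}
    (h : XX C (i + 1) j = true) : tri (XX C i) j = false := by
  by_contra hcon
  simp only [tri, Bool.not_eq_false, Bool.and_eq_true, XX_true] at hcon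
  exact hC.2 _ hcon.1.2 ⟨hcon.2, hcon.1.1, XX_true.1 h⟩

lemma rowOK {m n : ℕ} (hn : 2 ≤ n) {C : Finset (ℕ × ℕ)} (hC : MaximalConfig m n C) {q : ℕ}
    (hq : q + 1 ≤ m) : RowOK n (XX C (q + 1)) (XX C (q + 2)) (tri (XX C q)) := by
  have hs := hC.1.1
  refine ⟨XX_out hs (by omega), XX_out hs (by omega), ?_, ?_, ?_, ?_, ?_⟩
  · simp [tri, XX_out hs (i := q) (j := 0) (by omega)]
  · simp [tri, XX_out hs (i := q) (j := 0) (by omega)]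
  · simp [tri, XX_out hs (i := q) (j := n + 1) (by omega)]
  · intro k hk; exact tri_below hC.1 hk
  · intro k h1 h2 hx hN
    rcases just hC (by omega) hq h1 h2 hx with h | h | h | h
    · exact Or.inl ⟨h.1, h.2.1⟩
    · exact Or.inr (Or.inl h)
    · exact Or.inr (Or.inr h)
    · rw [Nat.add_sub_cancel, hN] at h; cases h

lemma cum {m n : ℕ} (hn : 2 ≤ n) {C : Finset (ℕ × ℕ)} (hC : MaximalConfig m n C) (q : ℕ)
    (hq : q ≤ m) :
    q * (n + ee n) + cnt (tri (XX C q)) n + pot n (tri (XX C q)) (XX C (q + 1)) ≤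
      2 * ∑ i ∈ Finset.Icc 1 q, cnt (XX C i) n := by
  have hs := hC.1.1
  induction q with
  | zero =>
    have h0 : tri (XX C 0) = fun _ => false := by
      funext k; simp [tri, XX_out hs (i := 0)]
    have hc : ∀ k, cnt (fun _ => false) k = 0 := by
      intro k; induction k with
      | zero => rfl
      | succ k ih => simp [cnt, ih]
    have hr : ∀ z k, rr n (fun _ => false) z k = 0 ∧ ll n (fun _ => false) z k = 0 := by
      intro z k; induction k with
      | zero => exact ⟨rfl, rfl⟩
      | succ k ih => simp [rr, ll, ih]
    simp [h0, hc, pot, (hr _ _).1, (hr _ _).2, val]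
  | succ q ih =>
    have ih := ih (by omega)
    have hR := rowOK hn hC hq
    have hI := row_ineq hR
    have hS := ss_eq _ _ hR.x0 hR.xN (n - 1)
    rw [show n - 1 + 1 = n by omega] at hS
    have hT : cnt (tri (XX C (q + 1))) n = cnt (tri (XX C (q + 1))) (n - 1) := by
      conv_lhs => rw [show n = n - 1 + 1 by omega]
      rw [cnt, show n - 1 + 1 = n by omega]
      have : tri (XX C (q + 1)) n = false := by simp [tri, hR.xn]
      simp [this]
    rw [Finset.sum_Icc_succ_top (by omega)]
    have hc : ((n - 1 : ℕ) : ℤ) + 1 = n := by push_cast [show 1 ≤ n by omega]; ring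
    rw [hc] at hS
    push_cast
    rw [hT]
    linarith

lemma even_nee (n : ℕ) : ∃ t : ℤ, (n : ℤ) + ee n = 2 * t := by
  unfold ee
  split_ifs
  · exact ⟨n / 2, by omega⟩
  · exact ⟨(n + 2) / 2, by omega⟩
  · exact ⟨(n + 1) / 2, by omega⟩

lemma last_two {m n : ℕ} (hm : 2 ≤ m) (hn : 2 ≤ n) {C : Finset (ℕ × ℕ)}
    (hC : MaximalConfig m n C) :
    (n : ℤ) + 2 ≤ cnt (XX C (m - 1)) n + cnt (XX C m) n := by
  have hs := hC.1.1
  set x := XX C (m - 1) with hxd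
  have h0 : x 0 = false := XX_out hs (by omega)
  have hout : ∀ j, n < j → x j = false := fun j hj => XX_out hs (by omega)
  have h1 : (n : ℤ) ≤ cnt (XX C m) n + cnt (tri x) n := by
    refine compl_count _ _ n ?_ n le_rfl
    intro j hj hjn hx
    have := just hC (by omega) le_rfl hj hjn hx
    have hz : ∀ j, XX C (m + 1) j = false := fun j => XX_out hs (by omega)
    simpa [hz] using this
  have h2 : 2 ≤ cnt x n := by
    have hup0 : XX C (m - 1 - 1) 0 = false := XX_out hs (by omega)
    have hupn : XX C (m - 1 - 1) (n + 1) = false := XX_out hs (by omega)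
    rcases ha : x 1
    · have := just hC (i := m - 1) (j := 1) (by omega) (by omega) le_rfl (by omega) ha
      simp only [← hxd, tri, hup0] at this
      simp [h0] at this
      have h3 : 3 ≤ n := by
        by_contra hcon
        rw [hout 3 (by omega)] at this; simp at this
      exact cnt_two x (a := 2) (b := 3) (by omega) (by omega) h3 this.1 this.2.1
    · rcases hb : x n
      · have := just hC (i := m - 1) (j := n) (by omega) (by omega) (by omega) le_rfl hb
        simp only [← hxd, tri, hupn, hout (n + 1) (by omega)] at this
        simp at this
        have h3 : 3 ≤ n := by
          by_contra hcon
          rw [show n - 2 = 0 by omega, h0] at this; simp at this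
        exact cnt_two x (a := n - 2) (b := n - 1) (by omega) (by omega) (by omega) this.2.1 this.1
      · exact cnt_two x (a := 1) (b := n) (by omega) (by omega) le_rfl ha hb
  have h3 := tri_count x h0 (n - 1)
  rw [show n - 1 + 1 = n by omega] at h3
  have hT : cnt (tri x) n = cnt (tri x) (n - 1) := by
    conv_lhs => rw [show n = n - 1 + 1 by omega]
    rw [cnt, show n - 1 + 1 = n by omega]
    have : tri x n = false := by simp [tri, hout (n + 1) (by omega)]
    simp [this]
  omega

theorem main {m n : ℕ} (hm : 2 ≤ m) (hn : 2 ≤ n) {C : Finset (ℕ × ℕ)}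
    (hC : MaximalConfig m n C) :
    ((m : ℤ) - 2) * (n + ee n) + 2 * n + 4 ≤ 2 * C.card := by
  have hs := hC.1.1
  obtain ⟨r, rfl⟩ : ∃ r, m = r + 2 := ⟨m - 2, by omega⟩
  have h1 := cum hn hC r (by omega)
  have h2 := last_two hm hn hC
  have h3 := pot_ge n (tri (XX C r)) (XX C (r + 1))
    (by simp [tri, XX_out hs (i := r) (j := 0) (by omega)])
  have h4 := card_eq hs
  rw [Finset.sum_Icc_succ_top (by omega), Finset.sum_Icc_succ_top (by omega)] at h4
  rw [show r + 2 - 1 = r + 1 by omega] at h2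
  rw [show r + 1 + 1 = r + 2 by omega] at h4
  obtain ⟨t, ht⟩ := even_nee n
  rw [ht] at h1 ⊢
  have e1 : (r : ℤ) * (2 * t) = 2 * (r * t) := by ring
  have e2 : (((r + 2 : ℕ) : ℤ) - 2) * (2 * t) = 2 * (r * t) := by push_cast; ring
  rw [e1] at h1
  rw [e2]
  omega

end SLB

theorem sharp_lower_bound (m n : ℕ) (hm : 2 ≤ m) (hn : 2 ≤ n)
    (C : Finset (ℕ × ℕ)) (hC : MaximalConfig m n C) :
    (n % 4 = 0 → m * n + 4 ≤ 2 * C.card) ∧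
    (n % 4 = 2 → m * (n + 2) ≤ 2 * C.card) ∧
    (n % 2 = 1 → m * (n + 1) + 2 ≤ 2 * C.card) := by
  have h := SLB.main hm hn hC
  refine ⟨fun h4 => ?_, fun h4 => ?_, fun h4 => ?_⟩
  · have he : SLB.ee n = 0 := by simp [SLB.ee, h4]
    rw [he] at h; zify; linarith
  · have he : SLB.ee n = 2 := by simp [SLB.ee, h4]
    rw [he] at h; zify; linarith
  · have he : SLB.ee n = 1 := by
      unfold SLB.ee; rw [if_neg (by omega), if_neg (by omega)]
    rw [he] at h; zify; linarith
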